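/- For every Kreweras word w of length 3n, the map σ_w : {1,…,3n} → {1,…,3n} is a bijection (a permutation of {1,…,3n}). -/

import Mathlib

/-- The three letters of a Kreweras word. -/
inductive KLetter : Type
  | A | B | C
deriving DecidableEq, Repr

open KLetter

/-- `w` is a Kreweras word of length `3 * n`: it has `n` `A`'s, `n` `B`'s, `n` `C`'s,
and every prefix has at least as many `A`'s as `B`'s and at least as many `A`'s as `C`'s. -/
def IsKrewerasWord (n : ℕ) (w : List KLetter) : Prop :=
  w.length = 3 * n ∧ w.count A = n ∧ w.count B = n ∧ w.count C = n ∧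
  ∀ k : ℕ, (w.take k).count B ≤ (w.take k).count A ∧
           (w.take k).count C ≤ (w.take k).count A

/-- `kiota w` is the smallest index `ι ≥ 1` (1-indexed) such that the prefix of
length `ι` of `w` has equally many `A`'s as `B`'s, or equally many `A`'s as `C`'s
(and `0` if no such index exists). -/
def kiota (w : List KLetter) : ℕ :=
  (((List.range (w.length + 1)).filter fun k =>
      decide (1 ≤ k) &&
      (((w.take k).count A == (w.take k).count B) ||
       ((w.take k).count A == (w.take k).count C))).headD 0)

/-- Promotion of a Kreweras word:
`pro w = (w₂, …, w_{ι-1}, A, w_{ι+1}, …, w_{3n}, w_ι)` where `ι = kiota w`. -/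
def pro (w : List KLetter) : List KLetter :=
  ((w.drop 1).set (kiota w - 2) A) ++ [w.getD (kiota w - 1) A]

/-- The trip permutation `σ_w` of a Kreweras word of length `3 * n`, as a function on
1-indexed positions: `σ_w i` is the unique element of `{1, …, 3n}` congruent to
`kiota (pro^[i-1] w) + i - 1` modulo `3 * n`. -/
def ksigma (n : ℕ) (w : List KLetter) (i : ℕ) : ℕ :=
  (kiota (pro^[i - 1] w) + i - 2) % (3 * n) + 1

/-- `keps w i` is the letter of `pro^[i-1] w` in (1-indexed) position `kiota (pro^[i-1] w)`. -/
def keps (w : List KLetter) (i : ℕ) : KLetter :=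
  (pro^[i - 1] w).getD (kiota (pro^[i - 1] w) - 1) A

/-- The negation swapping `B` and `C` (and fixing `A`). -/
def negL : KLetter → KLetter
  | A => A
  | B => C
  | C => B

open Classical in
/-- The involution `τ_i` on Kreweras words of length `3 * n`: swap the letters in
(1-indexed) positions `i` and `i + 1` if the result is again a Kreweras word,
and otherwise do nothing. -/
noncomputable def tau (n i : ℕ) (w : List KLetter) : List KLetter :=
  let w' := (w.set (i - 1) (w.getD i A)).set i (w.getD (i - 1) A)
  if IsKrewerasWord n w' then w' else w

/-- `tauDown n j = τ_j ∘ τ_{j-1} ∘ ⋯ ∘ τ_1`. -/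
noncomputable def tauDown (n : ℕ) : ℕ → List KLetter → List KLetter
  | 0, w => w
  | j + 1, w => tau n (j + 1) (tauDown n j w)

/-- `evacAux n j = (tauDown n 1) ∘ (tauDown n 2) ∘ ⋯ ∘ (tauDown n j)`. -/
noncomputable def evacAux (n : ℕ) : ℕ → List KLetter → List KLetter
  | 0, w => w
  | j + 1, w => evacAux n j (tauDown n (j + 1) w)

/-- Evacuation on Kreweras words of length `3 * n`:
`evac = (τ_1) ∘ (τ_2 ∘ τ_1) ∘ ⋯ ∘ (τ_{3n-1} ∘ ⋯ ∘ τ_2 ∘ τ_1)`. -/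
noncomputable def evac (n : ℕ) (w : List KLetter) : List KLetter :=
  evacAux n (3 * n - 1) w

/-- `tauAsc n k c = τ_{k+c-1} ∘ ⋯ ∘ τ_{k+1} ∘ τ_k`. -/
noncomputable def tauAsc (n k : ℕ) : ℕ → List KLetter → List KLetter
  | 0, w => w
  | j + 1, w => tau n (k + j) (tauAsc n k j w)

/-- `evacStarAux n j = (tauAsc n 1 (3n-1)) ∘ (tauAsc n 2 (3n-2)) ∘ ⋯ ∘ (tauAsc n j (3n-j))`. -/
noncomputable def evacStarAux (n : ℕ) : ℕ → List KLetter → List KLetter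
  | 0, w => w
  | j + 1, w => evacStarAux n j (tauAsc n (j + 1) (3 * n - (j + 1)) w)

/-- Dual evacuation on Kreweras words of length `3 * n`:
`evac* = (τ_{3n-1} ∘ ⋯ ∘ τ_1) ∘ (τ_{3n-1} ∘ ⋯ ∘ τ_2) ∘ ⋯ ∘ (τ_{3n-1})`. -/
noncomputable def evacStar (n : ℕ) (w : List KLetter) : List KLetter :=
  evacStarAux n (3 * n - 1) w

/-- The three-element "V"-shaped poset: `a < b`, `a < c`, with `b`, `c` incomparable. -/
inductive VP : Type
  | a | b | c
deriving DecidableEq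

instance : PartialOrder VP where
  le x y := x = y ∨ x = VP.a
  le_refl x := Or.inl rfl
  le_trans x y z hxy hyz := by
    rcases hxy with rfl | rfl
    · exact hyz
    · exact Or.inr rfl
  le_antisymm x y hxy hyx := by
    rcases hxy with rfl | rfl
    · rfl
    · rcases hyx with rfl | rfl <;> rfl

/-- The labeling of elements of `V(n) = VP × Fin n` by letters. -/
def vlabel {n : ℕ} (p : VP × Fin n) : KLetter :=
  match p.1 with
  | VP.a => A
  | VP.b => B
  | VP.c => C

/-- `L` is a linear extension of `V(n) = VP × Fin n` (with the product order):
a list of all elements of `V(n)`, each appearing once, such that `L_i ≤ L_j`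
implies `i ≤ j`. -/
def IsLinearExtension (n : ℕ) (L : List (VP × Fin n)) : Prop :=
  L.Nodup ∧ (∀ p : VP × Fin n, p ∈ L) ∧
  ∀ i j : Fin L.length, L.get i ≤ L.get j → (i : ℕ) ≤ (j : ℕ)

/-- A connected Kreweras word: a Kreweras word of length `3 * n` having no proper
nonempty consecutive substring which is itself a Kreweras word. -/
def ConnectedKrewerasWord (n : ℕ) (w : List KLetter) : Prop :=
  IsKrewerasWord n w ∧
  ∀ (u : List KLetter) (m : ℕ), u <:+: w → u ≠ [] → u ≠ w → ¬ IsKrewerasWord m u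

/-!
Every return of promotion starts a *trip*. If the first return of `w` is at the letter `X` in
position `q`, then `pro w` has a new `A` in position `q - 1` and the returned `X` appended at its
end, and the trip from that `X` to its left ends in that `A`. Promotion merely translates trips to
the left until the end of a trip reaches the front of the word. At that moment its `A` is deleted,
and from then on the trip ends on its right, in the letter that is appended. So, until the start of
the trip reaches the front, a position of `pro^[t] w` congruent to `q - t` modulo `3n` is the end of
the trip, and the first return of `pro^[t] w` is not there: an `A` is not a return letter, and a
return at the right end contradicts the level at which that trip ends. Hence for `0 < t < 3n` the
numbers `ι(pro^[t] w) + t` and `ι(w)` are incongruent modulo `3n`, which makes `σ_w` injective.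
-/

theorem negL_ne_A {X : KLetter} (hX : X ≠ A) : negL X ≠ A := by
  cases X <;> simp_all [negL]

theorem eq_or_eq_negL {X Z : KLetter} (hX : X ≠ A) (hZ : Z ≠ A) : Z = X ∨ Z = negL X := by
  cases X <;> cases Z <;> simp_all [negL]

theorem negL_ne_self {X : KLetter} (hX : X ≠ A) : negL X ≠ X := by
  cases X <;> simp_all [negL]

/-- The excess of `A`'s over `X`'s among the first `k` letters of `w`. It is meant for `X ≠ A`, and
is integer-valued so that differences of heights do not truncate. -/
def height (X : KLetter) (w : List KLetter) (k : ℕ) : ℤ :=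
  (w.take k).count A - (w.take k).count X

section Height

variable {X L : KLetter} {w : List KLetter} {k : ℕ}

@[simp]
theorem height_zero (X : KLetter) (w : List KLetter) : height X w 0 = 0 := by
  simp [height]

theorem height_succ (hX : X ≠ A) (hk : w[k]? = some L) :
    height X w (k + 1) = height X w k + if L = A then 1 else if L = X then -1 else 0 := by
  simp only [height, List.take_add_one, hk, Option.toList_some, List.count_append,
    List.count_singleton]
  cases X <;> cases L <;> simp at hX ⊢ <;> ring

theorem height_succ_of_getElem?_eq_A (hX : X ≠ A) (hk : w[k]? = some A) :
    height X w (k + 1) = height X w k + 1 := by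
  simp [height_succ hX hk]

theorem height_succ_of_getElem?_eq_self (hX : X ≠ A) (hk : w[k]? = some X) :
    height X w (k + 1) = height X w k - 1 := by
  simp [height_succ hX hk, hX, sub_eq_add_neg]

theorem height_succ_of_length_le (hk : w.length ≤ k) : height X w (k + 1) = height X w k := by
  simp [height, List.take_of_length_le hk, List.take_of_length_le (hk.trans k.le_succ)]

theorem getElem?_eq_A_of_height_lt (hX : X ≠ A) (h : height X w k < height X w (k + 1)) :
    w[k]? = some A := by
  rcases lt_or_ge k w.length with hk | hk
  · have hk := List.getElem?_eq_getElem hk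
    rw [height_succ hX hk] at h
    split_ifs at h with hA
    · rw [hk, hA]
    all_goals omega
  · exact absurd (height_succ_of_length_le hk) h.ne'

theorem getElem?_eq_self_of_height_lt (hX : X ≠ A) (h : height X w (k + 1) < height X w k) :
    w[k]? = some X := by
  rcases lt_or_ge k w.length with hk | hk
  · have hk := List.getElem?_eq_getElem hk
    rw [height_succ hX hk] at h
    split_ifs at h with hA hL
    · omega
    · rw [hk, hL]
    · omega
  · exact absurd (height_succ_of_length_le hk) h.ne

end Height

namespace IsKrewerasWord

variable {n : ℕ} {w : List KLetter} {X : KLetter}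

theorem height_nonneg (hw : IsKrewerasWord n w) (hX : X ≠ A) (k : ℕ) : 0 ≤ height X w k := by
  have := hw.2.2.2.2 k
  cases X <;> simp only [height, ne_eq, not_true_eq_false] at hX ⊢ <;> omega

theorem height_length (hw : IsKrewerasWord n w) : height X w w.length = 0 := by
  obtain ⟨-, hA, hB, hC, -⟩ := hw
  cases X <;> simp [height, hA, hB, hC]

theorem pos_of_lt_length (hw : IsKrewerasWord n w) {k : ℕ} (hk : k < w.length) : 0 < n := by
  have := hw.1
  omega

theorem getElem?_zero (hw : IsKrewerasWord n w) (hn : 0 < n) : w[0]? = some A := by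
  have hlen : 0 < w.length := by have := hw.1; omega
  have hfirst : w[0]? = some w[0] := List.getElem?_eq_getElem hlen
  have hB := hw.height_nonneg (X := B) (by decide) 1
  have hC := hw.height_nonneg (X := C) (by decide) 1
  rw [← zero_add 1, height_succ (by decide) hfirst] at hB hC
  rw [hfirst]
  cases h : w[0] <;> simp [h] at hB hC ⊢

theorem height_one (hw : IsKrewerasWord n w) (hn : 0 < n) (hX : X ≠ A) : height X w 1 = 1 := by
  simpa using height_succ_of_getElem?_eq_A hX (hw.getElem?_zero hn)

end IsKrewerasWord

theorem kiota_eq {w : List KLetter} {m : ℕ} (hm : 0 < m) (hmw : m ≤ w.length)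
    (hret : height B w m = 0 ∨ height C w m = 0)
    (hmin : ∀ k, 0 < k → k < m → height B w k ≠ 0 ∧ height C w k ≠ 0) : kiota w = m := by
  unfold kiota
  rw [List.headD_eq_head?_getD, List.head?_filter, List.find?_range_eq_some.2 ⟨?_, ?_, ?_⟩,
    Option.getD_some]
  · simp only [height] at hret
    simp only [Bool.and_eq_true, decide_eq_true_eq, Bool.or_eq_true, beq_iff_eq]
    omega
  · exact List.mem_range.2 (by omega)
  · intro k hk
    have := hmin k
    simp only [height] at this
    simp only [Bool.not_eq_true', Bool.and_eq_false_iff, decide_eq_false_iff_not,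
      Bool.or_eq_false_iff, beq_eq_false_iff_ne]
    omega

/-- The Kreweras word `w` has its first return at the letter `Z` in the `0`-indexed position `q`:
the prefix of length `q + 1` is the first nonempty one in which the height of some letter vanishes,
and `Z` is that letter. -/
structure FirstReturn (n : ℕ) (w : List KLetter) (q : ℕ) (Z : KLetter) : Prop where
  isKrewerasWord : IsKrewerasWord n w
  kiota_eq : kiota w = q + 1
  ne_A : Z ≠ A
  letter : w[q]? = some Z
  height_return : height Z w (q + 1) = 0
  height_pos : ∀ X ≠ A, ∀ k, 0 < k → k ≤ q → 0 < height X w k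

theorem IsKrewerasWord.exists_firstReturn {n : ℕ} {w : List KLetter} (hw : IsKrewerasWord n w)
    (hn : 0 < n) : ∃ q Z, FirstReturn n w q Z := by
  classical
  have hlen : 0 < w.length := by have := hw.1; omega
  have hex : ∃ m, 0 < m ∧ (height B w m = 0 ∨ height C w m = 0) :=
    ⟨w.length, hlen, Or.inl hw.height_length⟩
  obtain ⟨hm, hret⟩ := Nat.find_spec hex
  have hle : Nat.find hex ≤ w.length := Nat.find_le ⟨hlen, Or.inl hw.height_length⟩
  have hmin : ∀ k, 0 < k → k < Nat.find hex → height B w k ≠ 0 ∧ height C w k ≠ 0 :=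
    fun k hk hlt => not_or.1 fun h => Nat.find_min hex hlt ⟨hk, h⟩
  have hkiota := kiota_eq hm hle hret hmin
  obtain ⟨q, hq⟩ : ∃ q, Nat.find hex = q + 1 := ⟨Nat.find hex - 1, by omega⟩
  simp only [hq] at hret hle hmin hkiota
  have hpos : ∀ X ≠ A, ∀ k, 0 < k → k ≤ q → 0 < height X w k := by
    intro X hX k hk hkq
    have := hmin k hk (by omega)
    refine lt_of_le_of_ne (hw.height_nonneg hX k) (Ne.symm ?_)
    cases X
    exacts [absurd rfl hX, this.1, this.2]
  obtain ⟨Z, hZ, hZret⟩ : ∃ Z ≠ A, height Z w (q + 1) = 0 :=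
    hret.elim (⟨B, by decide, ·⟩) (⟨C, by decide, ·⟩)
  refine ⟨q, Z, hw, hkiota, hZ, ?_, hZret, hpos⟩
  rcases q.eq_zero_or_pos with rfl | hq0
  · have := hw.height_one hn hZ
    rw [zero_add] at hZret
    omega
  · exact getElem?_eq_self_of_height_lt hZ (hZret.trans_lt (hpos Z hZ q hq0 le_rfl))

namespace FirstReturn

variable {n q k : ℕ} {w : List KLetter} {X Z : KLetter}

theorem lt_length (r : FirstReturn n w q Z) : q < w.length :=
  (List.getElem?_eq_some_iff.1 r.letter).1

theorem pos_size (r : FirstReturn n w q Z) : 0 < n :=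
  r.isKrewerasWord.pos_of_lt_length r.lt_length

theorem pos (r : FirstReturn n w q Z) : 0 < q := by
  refine Nat.pos_of_ne_zero fun hq => r.ne_A ?_
  have := r.letter
  rw [hq, r.isKrewerasWord.getElem?_zero r.pos_size] at this
  exact (Option.some.inj this).symm

theorem height_letter (r : FirstReturn n w q Z) : height Z w q = 1 := by
  have := height_succ_of_getElem?_eq_self r.ne_A r.letter
  have := r.height_return
  omega

theorem exists_append_eq (r : FirstReturn n w q Z) :
    ∃ u v, u.length + 1 = q ∧ w = A :: (u ++ Z :: v) ∧ pro w = u ++ A :: (v ++ [Z]) := by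
  obtain ⟨w', rfl⟩ : ∃ w', w = A :: w' := by
    have := r.isKrewerasWord.getElem?_zero r.pos_size
    rw [← List.head?_eq_getElem?, List.head?_eq_some_iff] at this
    exact this
  obtain ⟨p, rfl⟩ : ∃ p, q = p + 1 := ⟨q - 1, by have := r.pos; omega⟩
  obtain ⟨hp, hZ⟩ := List.getElem?_eq_some_iff.1 r.letter
  simp only [List.length_cons, add_lt_add_iff_right, List.getElem_cons_succ] at hp hZ
  have hw' : w' = w'.take p ++ Z :: w'.drop (p + 1) := by
    rw [← hZ, List.getElem_cons_drop, List.take_append_drop]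
  refine ⟨w'.take p, w'.drop (p + 1), by simp [hp.le], by rw [← hw'], ?_⟩
  simp only [pro, r.kiota_eq, Nat.add_sub_cancel, List.drop_one, List.tail_cons,
    List.getD_eq_getElem?_getD, r.letter, Option.getD_some]
  rw [show p + 1 + 1 - 2 = p by omega, List.set_eq_take_append_cons_drop, if_pos hp,
    List.append_assoc, List.cons_append]

theorem length_pro (r : FirstReturn n w q Z) : (pro w).length = w.length := by
  obtain ⟨u, v, -, rfl, hpro⟩ := r.exists_append_eq
  rw [hpro]
  simp
  omega

theorem getElem?_pro_return (r : FirstReturn n w q Z) : (pro w)[q - 1]? = some A := by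
  obtain ⟨u, v, rfl, -, hpro⟩ := r.exists_append_eq
  simp [hpro]

theorem getElem?_pro_of_ne (r : FirstReturn n w q Z) (hk : k + 1 < w.length) (hkq : k + 1 ≠ q) :
    (pro w)[k]? = w[k + 1]? := by
  obtain ⟨u, v, rfl, rfl, hpro⟩ := r.exists_append_eq
  rw [hpro]
  simp only [List.length_cons, List.length_append] at hk
  simp only [List.getElem?_append, List.getElem?_cons_succ]
  grind

theorem getElem?_pro_last (r : FirstReturn n w q Z) : (pro w)[w.length - 1]? = some Z := by
  obtain ⟨u, v, rfl, rfl, hpro⟩ := r.exists_append_eq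
  rw [hpro]
  grind

theorem height_pro_of_lt (r : FirstReturn n w q Z) (hX : X ≠ A) (hk : k < q) :
    height X (pro w) k = height X w (k + 1) - 1 := by
  obtain ⟨u, v, rfl, rfl, hpro⟩ := r.exists_append_eq
  have hku : k ≤ u.length := by omega
  simp [hpro, height, List.take_append_of_le_length hku, hX.symm]
  ring

theorem height_pro_of_ge (r : FirstReturn n w q Z) (hX : X ≠ A) (hqk : q ≤ k)
    (hk : k < w.length) :
    height X (pro w) k = height X w (k + 1) + if X = Z then 1 else 0 := by
  obtain ⟨u, v, rfl, rfl, hpro⟩ := r.exists_append_eq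
  obtain ⟨m, rfl⟩ : ∃ m, k = u.length + 1 + m := ⟨k - (u.length + 1), by omega⟩
  have hm : m ≤ v.length := by
    simp only [List.length_cons, List.length_append] at hk
    omega
  have hpre : (A :: (u ++ Z :: v)).take (u.length + 1 + m + 1) = A :: (u ++ Z :: v.take m) := by
    rw [List.take_succ_cons, add_assoc, List.take_length_add_append, add_comm 1,
      List.take_succ_cons]
  have hpre' : (pro (A :: (u ++ Z :: v))).take (u.length + 1 + m) = u ++ A :: v.take m := by
    rw [hpro, add_assoc, List.take_length_add_append, add_comm 1, List.take_succ_cons,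
      List.take_append_of_le_length hm]
  simp only [height, hpre, hpre', List.count_cons, List.count_append, beq_iff_eq, r.ne_A, hX.symm,
    eq_comm (a := X), if_true, if_false]
  split_ifs <;> push_cast <;> ring

theorem height_pro_self_of_ge (r : FirstReturn n w q Z) (hqk : q ≤ k) (hk : k < w.length) :
    height Z (pro w) k = height Z w (k + 1) + 1 := by
  rw [r.height_pro_of_ge r.ne_A hqk hk, if_pos rfl]

theorem height_pro_of_ge_of_ne (r : FirstReturn n w q Z) (hX : X ≠ A) (hXZ : X ≠ Z) (hqk : q ≤ k)
    (hk : k < w.length) : height X (pro w) k = height X w (k + 1) := by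
  rw [r.height_pro_of_ge hX hqk hk, if_neg hXZ, add_zero]

theorem exists_height_pro_eq_add (r : FirstReturn n w q Z) (hX : X ≠ A) {i j : ℕ}
    (hq : q ≤ i ∨ j < q) (hj : j < w.length) :
    ∃ c, ∀ k, i ≤ k → k ≤ j → height X (pro w) k = height X w (k + 1) + c := by
  rcases hq with hq | hq
  · exact ⟨_, fun k _ _ => r.height_pro_of_ge hX (by omega) (by omega)⟩
  · exact ⟨-1, fun k _ _ => r.height_pro_of_lt hX (by omega)⟩

theorem isKrewerasWord_pro (r : FirstReturn n w q Z) : IsKrewerasWord n (pro w) := by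
  have hcount : ∀ L, (pro w).count L = w.count L := by
    obtain ⟨u, v, -, rfl, hpro⟩ := r.exists_append_eq
    intro L
    rw [hpro]
    simp only [List.count_cons, List.count_append, List.count_nil]
    omega
  have hnonneg : ∀ X ≠ A, ∀ k, 0 ≤ height X (pro w) k := by
    intro X hX k
    rcases lt_or_ge k w.length with hk | hk
    · rcases lt_or_ge k q with hkq | hkq
      · have := r.height_pos X hX (k + 1) k.succ_pos hkq
        rw [r.height_pro_of_lt hX hkq]
        omega
      · have := r.isKrewerasWord.height_nonneg hX (k + 1)
        rw [r.height_pro_of_ge hX hkq hk]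
        split_ifs <;> omega
    · have := r.isKrewerasWord.height_length (X := X)
      simp only [height, List.take_length] at this
      rw [height, List.take_of_length_le (r.length_pro.trans_le hk), hcount, hcount, this]
  obtain ⟨hlen, hA, hB, hC, -⟩ := r.isKrewerasWord
  refine ⟨r.length_pro.trans hlen, by rw [hcount, hA], by rw [hcount, hB], by rw [hcount, hC],
    fun k => ?_⟩
  have hBk := hnonneg B (by decide) k
  have hCk := hnonneg C (by decide) k
  simp only [height] at hBk hCk
  omega

end FirstReturn

section Covered

variable {f g f' g' : ℕ → ℤ} {c d a : ℤ} {i j s y : ℕ}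

/-- The function `h` takes a value at most `a` on the interval `[i, j]`. -/
def Dips (h : ℕ → ℤ) (i j : ℕ) (a : ℤ) : Prop :=
  ∃ k, i ≤ k ∧ k ≤ j ∧ h k ≤ a

/-- Looking from `s` to the left as far as `y`, the function `g` gets at least as far below `g s` as
`f y` is below `f s`. -/
def LeftCovered (f g : ℕ → ℤ) (s y : ℕ) : Prop :=
  Dips g y s (g s - (f s - f y))

/-- Looking from `s` to the right as far as `j`, the function `f` gets strictly further below `f s`
than `g j` is below `g s`. -/
def RightCovered (f g : ℕ → ℤ) (s j : ℕ) : Prop :=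
  Dips f s j (f s - (g s - g j) - 1)

theorem dips_shift_iff (hf : ∀ k, i ≤ k → k ≤ j → f' k = f (k + 1) + c) :
    Dips f' i j (a + c) ↔ Dips f (i + 1) (j + 1) a := by
  constructor
  · rintro ⟨k, hik, hkj, hk⟩
    exact ⟨k + 1, by omega, by omega, by have := hf k hik hkj; omega⟩
  · rintro ⟨k, hik, hkj, hk⟩
    obtain ⟨k, rfl⟩ : ∃ m, k = m + 1 := ⟨k - 1, by omega⟩
    exact ⟨k, by omega, by omega, by have := hf k (by omega) (by omega); omega⟩

theorem leftCovered_shift_iff (hys : y ≤ s) (hf : ∀ k, y ≤ k → k ≤ s → f' k = f (k + 1) + c)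
    (hg : ∀ k, y ≤ k → k ≤ s → g' k = g (k + 1) + d) :
    LeftCovered f' g' s y ↔ LeftCovered f g (s + 1) (y + 1) := by
  rw [LeftCovered, LeftCovered, ← dips_shift_iff hg, hf s hys le_rfl, hf y le_rfl hys,
    hg s hys le_rfl]
  ring_nf

theorem rightCovered_shift_iff (hsj : s ≤ j) (hf : ∀ k, s ≤ k → k ≤ j → f' k = f (k + 1) + c)
    (hg : ∀ k, s ≤ k → k ≤ j → g' k = g (k + 1) + d) :
    RightCovered f' g' s j ↔ RightCovered f g (s + 1) (j + 1) := by
  rw [RightCovered, RightCovered, ← dips_shift_iff hf, hf s le_rfl hsj, hg s le_rfl hsj,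
    hg j hsj le_rfl]
  ring_nf

end Covered

namespace FirstReturn

variable {n q s j y : ℕ} {w : List KLetter} {X Y Z : KLetter}

theorem leftCovered_pro_iff (r : FirstReturn n w q Z) (hX : X ≠ A) (hY : Y ≠ A)
    (hq : q ≤ y ∨ s < q) (hys : y ≤ s) (hsw : s < w.length) :
    LeftCovered (height X (pro w)) (height Y (pro w)) s y ↔
      LeftCovered (height X w) (height Y w) (s + 1) (y + 1) := by
  obtain ⟨c, hf⟩ := r.exists_height_pro_eq_add hX hq hsw
  obtain ⟨d, hg⟩ := r.exists_height_pro_eq_add hY hq hsw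
  exact leftCovered_shift_iff hys hf hg

theorem rightCovered_pro_iff (r : FirstReturn n w q Z) (hX : X ≠ A) (hY : Y ≠ A)
    (hq : q ≤ s ∨ j < q) (hsj : s ≤ j) (hjw : j < w.length) :
    RightCovered (height X (pro w)) (height Y (pro w)) s j ↔
      RightCovered (height X w) (height Y w) (s + 1) (j + 1) := by
  obtain ⟨c, hf⟩ := r.exists_height_pro_eq_add hX hq hjw
  obtain ⟨d, hg⟩ := r.exists_height_pro_eq_add hY hq hjw
  exact rightCovered_shift_iff hsj hf hg

end FirstReturn

/-- The trip of the letter `X` in position `s` ends to its left, in position `v`. With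
`f = height X` and `g = height (negL X)`, the trip is encoded without its intermediate steps: `v` is
the first position on the way left from `s` that is not covered, and to the right of `s` the word is
covered at least until `f` has come down to `f v`. -/
structure LeftTrip (w : List KLetter) (X : KLetter) (s v : ℕ) : Prop where
  ne_A : X ≠ A
  letter : w[s]? = some X
  lt : v < s
  covered : ∀ y, v < y → y ≤ s → LeftCovered (height X w) (height (negL X) w) s y
  not_covered : ¬LeftCovered (height X w) (height (negL X) w) s v
  right : ∀ j, s < j → j ≤ w.length →
    RightCovered (height X w) (height (negL X) w) s j ∨ Dips (height X w) s j (height X w v)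

/-- The trip of the letter `X` in position `s` ends to its right, in position `e`. This mirrors
`LeftTrip`, but since `height` is read off before a letter, `e + 1` (and not `e`) is the first index
on the way right from `s` that is not covered; to the left of `s` the word is covered at least until
`g = height (negL X)` has come down to `g (e + 1)`. -/
structure RightTrip (w : List KLetter) (X : KLetter) (s e : ℕ) : Prop where
  ne_A : X ≠ A
  lt : s < e
  lt_length : e < w.length
  covered : ∀ j, s < j → j ≤ e → RightCovered (height X w) (height (negL X) w) s j
  not_covered : ¬RightCovered (height X w) (height (negL X) w) s (e + 1)
  left : ∀ y ≤ s, LeftCovered (height X w) (height (negL X) w) s y ∨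
    Dips (height (negL X) w) y s (height (negL X) w (e + 1))

theorem FirstReturn.leftTrip_pro {n q : ℕ} {w : List KLetter} {X : KLetter}
    (r : FirstReturn n w q X) : LeftTrip (pro w) X (w.length - 1) (q - 1) := by
  have hq := r.pos
  have hqw := r.lt_length
  have hX := r.ne_A
  have hw := r.isKrewerasWord
  have hlen := r.length_pro
  have hlast : w.length - 1 + 1 = w.length := by omega
  have hfs : height X (pro w) (w.length - 1) = 1 := by
    rw [r.height_pro_self_of_ge (by omega) (by omega), hlast, hw.height_length, zero_add]
  have hgs : height (negL X) (pro w) (w.length - 1) = 0 := by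
    rw [r.height_pro_of_ge_of_ne (negL_ne_A hX) (negL_ne_self hX) (by omega) (by omega), hlast,
      hw.height_length]
  have hfv : height X (pro w) (q - 1) = 0 := by
    rw [r.height_pro_of_lt hX (by omega), Nat.sub_add_cancel hq, r.height_letter, sub_self]
  refine ⟨hX, r.getElem?_pro_last, by omega, fun y hy hys => ⟨w.length - 1, hys, le_rfl, ?_⟩, ?_,
    ?_⟩
  · have := r.height_pro_self_of_ge (k := y) (by omega) (by omega)
    have := hw.height_nonneg hX (y + 1)
    omega
  · rintro ⟨j, -, -, hj⟩
    have := r.isKrewerasWord_pro.height_nonneg (negL_ne_A hX) j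
    omega
  · intro j hj hjw
    refine Or.inr ⟨j, hj.le, le_rfl, ?_⟩
    rw [hfv, show j = (pro w).length by omega, r.isKrewerasWord_pro.height_length]

namespace LeftTrip

variable {n q s v : ℕ} {w : List KLetter} {X Z : KLetter}

theorem lt_length (T : LeftTrip w X s v) : s < w.length :=
  (List.getElem?_eq_some_iff.1 T.letter).1

theorem height_lt (T : LeftTrip w X s v) {j : ℕ} (hvj : v < j) (hjs : j ≤ s) :
    height X w v < height X w j := by
  obtain ⟨k, hjk, hks, hk⟩ := T.covered j hvj hjs
  by_contra h
  exact T.not_covered ⟨k, by omega, hks, by omega⟩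

theorem getElem?_end (T : LeftTrip w X s v) : w[v]? = some A :=
  getElem?_eq_A_of_height_lt T.ne_A (T.height_lt v.lt_succ_self T.lt)

theorem return_ne_end (r : FirstReturn n w q Z) (T : LeftTrip w X s v) : q ≠ v := by
  rintro rfl
  have := r.letter
  rw [T.getElem?_end] at this
  exact r.ne_A (Option.some.inj this).symm

theorem return_ne_start (r : FirstReturn n w q Z) (hv : 0 < v) (T : LeftTrip w X s v) : q ≠ s := by
  have hX := T.ne_A
  rintro rfl
  have hZX : Z = X := Option.some.inj (r.letter.symm.trans T.letter)
  have := r.height_letter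
  have := T.height_lt T.lt le_rfl
  have := r.height_pos X hX v hv T.lt.le
  rw [hZX] at *
  omega

theorem letter_eq_negL (r : FirstReturn n w q Z) (T : LeftTrip w X s v)
    (hvq : v < q) (hqs : q < s) : Z = negL X := by
  have hX := T.ne_A
  refine (eq_or_eq_negL hX r.ne_A).resolve_left ?_
  rintro rfl
  have := T.height_lt (j := q + 1) (by omega) hqs
  have := r.height_return
  have := r.isKrewerasWord.height_nonneg hX v
  omega

theorem leftCovered_pro_of_between (r : FirstReturn n w q Z)
    (T : LeftTrip w X (s + 1) v) (hvq : v < q) (hqs : q ≤ s) {y : ℕ} (hvy : v ≤ y) (hys : y ≤ s) :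
    LeftCovered (height X (pro w)) (height (negL X) (pro w)) s y := by
  have hX := T.ne_A
  have hY := negL_ne_A hX
  have hsw := T.lt_length
  obtain rfl := T.letter_eq_negL r hvq (by omega)
  have hcov := T.covered (y + 1) (by omega) (by omega)
  rcases le_or_gt q y with hqy | hqy
  · exact (r.leftCovered_pro_iff hX hY (.inl hqy) hys (by omega)).2 hcov
  have hfs := r.height_pro_of_ge_of_ne hX (negL_ne_self hX).symm hqs (by omega)
  have hgs := r.height_pro_self_of_ge hqs (by omega)
  have hfy := r.height_pro_of_lt hX hqy
  obtain ⟨k, hyk, hks, hk⟩ := hcov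
  rcases le_or_gt k q with hkq | _
  · have := r.height_pro_of_lt hY (k := k - 1) (by omega)
    rw [Nat.sub_add_cancel (by omega)] at this
    exact ⟨k - 1, by omega, by omega, by omega⟩
  · have := r.height_pro_of_lt hY (k := q - 1) (by omega)
    rw [Nat.sub_add_cancel (by omega), r.height_letter] at this
    have := r.isKrewerasWord.height_nonneg hY k
    exact ⟨q - 1, by omega, by omega, by omega⟩

theorem not_leftCovered_pro_of_between (r : FirstReturn n w q Z)
    (T : LeftTrip w X (s + 1) (v + 1)) (hvq : v + 1 < q) (hqs : q ≤ s) :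
    ¬LeftCovered (height X (pro w)) (height (negL X) (pro w)) s v := by
  have hX := T.ne_A
  have hY := negL_ne_A hX
  have hsw := T.lt_length
  obtain rfl := T.letter_eq_negL r hvq (by omega)
  have hfs := r.height_pro_of_ge_of_ne hX (negL_ne_self hX).symm hqs (by omega)
  have hgs := r.height_pro_self_of_ge hqs (by omega)
  have hfv := r.height_pro_of_lt hX (k := v) (by omega)
  rintro ⟨k, hvk, hks, hk⟩
  rcases lt_or_ge k q with hkq | hkq
  · have := r.height_pro_of_lt hY hkq
    have := r.height_pos (negL X) hY (k + 1) (by omega) hkq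
    have := r.height_return
    exact T.not_covered ⟨q + 1, by omega, by omega, by omega⟩
  · have := r.height_pro_self_of_ge hkq (by omega)
    exact T.not_covered ⟨k + 1, by omega, by omega, by omega⟩

theorem right_pro_of_not_between (r : FirstReturn n w q Z)
    (T : LeftTrip w X (s + 1) (v + 1)) {j : ℕ} (hq : q ≤ v ∨ j < q) (hsj : s < j)
    (hjw : j < w.length) :
    RightCovered (height X (pro w)) (height (negL X) (pro w)) s j ∨
      Dips (height X (pro w)) s j (height X (pro w) v) := by
  have hX := T.ne_A
  have hvs := T.lt
  obtain ⟨c, hf⟩ := r.exists_height_pro_eq_add hX hq hjw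
  rw [hf v le_rfl (by omega), dips_shift_iff fun k hk => hf k (by omega),
    r.rightCovered_pro_iff hX (negL_ne_A hX) (by omega) hsj.le hjw]
  exact T.right (j + 1) (by omega) hjw

theorem right_pro_of_between (r : FirstReturn n w q Z)
    (T : LeftTrip w X (s + 1) (v + 1)) (hvq : v + 1 < q) (hqs : q ≤ s) {j : ℕ} (hsj : s < j)
    (hjw : j < w.length) :
    RightCovered (height X (pro w)) (height (negL X) (pro w)) s j := by
  have hX := T.ne_A
  have hY := negL_ne_A hX
  have hZ := T.letter_eq_negL r hvq (by omega)
  rw [r.rightCovered_pro_iff hX hY (.inl hqs) hsj.le hjw]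
  refine (T.right (j + 1) (by omega) hjw).elim id ?_
  rintro ⟨i, hsi, hij, hi⟩
  have hend : height (negL X) w (s + 1) < height X w (s + 1) - height X w (v + 1) := by
    by_contra h
    have := r.height_return
    exact T.not_covered ⟨q + 1, by omega, by omega, by rw [← hZ] at h ⊢; omega⟩
  have := r.isKrewerasWord.height_nonneg hY (j + 1)
  exact ⟨i, hsi, hij, by omega⟩

theorem right_pro_of_start_lt (r : FirstReturn n w q Z)
    (T : LeftTrip w X (s + 1) (v + 1)) (hsq : s + 1 < q) {j : ℕ} (hqj : q ≤ j)
    (hjw : j < w.length) :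
    RightCovered (height X (pro w)) (height (negL X) (pro w)) s j ∨
      Dips (height X (pro w)) s j (height X (pro w) v) := by
  have hX := T.ne_A
  have hY := negL_ne_A hX
  have hvs := T.lt
  have hfv := r.isKrewerasWord_pro.height_nonneg hX v
  have hq1 : q - 1 + 1 = q := by omega
  rcases eq_or_eq_negL hX r.ne_A with rfl | rfl
  · refine Or.inr ⟨q - 1, by omega, by omega, ?_⟩
    rw [r.height_pro_of_lt hX (by omega), hq1, r.height_letter]
    omega
  -- From `q` on, promotion raises `height (negL X)` by `2` relative to its value at the start of
  -- the trip, so that whatever answers for `q` in `w` answers for every `j ≥ q` in `pro w`.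
  have hfs := r.height_pro_of_lt hX (k := s) (by omega)
  have hgs := r.height_pro_of_lt hY (k := s) (by omega)
  have hgj := r.height_pro_self_of_ge hqj hjw
  have := r.isKrewerasWord.height_nonneg hY (j + 1)
  have := r.height_letter
  rcases T.right q (by omega) r.lt_length.le with ⟨i, hsi, hij, hi⟩ | ⟨i, hsi, hij, hi⟩ <;>
    have hfi := r.height_pro_of_lt hX (k := i - 1) (by omega) <;>
    rw [Nat.sub_add_cancel (by omega)] at hfi
  · exact Or.inl ⟨i - 1, by omega, by omega, by omega⟩
  · have := r.height_pro_of_lt hX (k := v) (by omega)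
    exact Or.inr ⟨i - 1, by omega, by omega, by omega⟩

protected theorem pro (r : FirstReturn n w q Z)
    (T : LeftTrip w X (s + 1) (v + 1)) : LeftTrip (pro w) X s v := by
  have hX := T.ne_A
  have hvs := T.lt
  have hsw := T.lt_length
  have hqv := T.return_ne_end r
  have hqs := T.return_ne_start r v.succ_pos
  have hcases : (v + 1 < q ∧ q ≤ s) ∨ q ≤ v ∨ s < q := by omega
  refine ⟨hX, (r.getElem?_pro_of_ne hsw hqs.symm).trans T.letter, by omega, fun y hvy hys => ?_, ?_,
    fun j hsj hjw => ?_⟩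
  · rcases hcases with ⟨hvq, hqs⟩ | hq
    · exact T.leftCovered_pro_of_between r (by omega) hqs (by omega) hys
    · exact (r.leftCovered_pro_iff hX (negL_ne_A hX) (by omega) hys (by omega)).2
        (T.covered _ (by omega) (by omega))
  · rcases hcases with ⟨hvq, hqs⟩ | hq
    · exact T.not_leftCovered_pro_of_between r hvq hqs
    · rw [r.leftCovered_pro_iff hX (negL_ne_A hX) hq (by omega) (by omega)]
      exact T.not_covered
  · rcases hjw.eq_or_lt with rfl | hjw
    · refine Or.inr ⟨_, hsj.le, le_rfl, ?_⟩
      rw [r.isKrewerasWord_pro.height_length]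
      exact r.isKrewerasWord_pro.height_nonneg hX v
    rw [r.length_pro] at hjw
    rcases hcases with ⟨hvq, hqs⟩ | hq
    · exact Or.inl (T.right_pro_of_between r hvq hqs hsj hjw)
    by_cases hq : q ≤ v ∨ j < q
    · exact T.right_pro_of_not_between r hq hsj hjw
    · exact T.right_pro_of_start_lt r (by omega) (by omega) hjw

theorem rightTrip_pro (r : FirstReturn n w q Z) (T : LeftTrip w X (s + 1) 0) :
    RightTrip (pro w) X s (w.length - 1) := by
  have hX := T.ne_A
  have hY := negL_ne_A hX
  have hw := r.isKrewerasWord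
  have hsw := T.lt_length
  have hlast : w.length - 1 + 1 = (pro w).length := by rw [r.length_pro]; omega
  have hgs : height (negL X) w (s + 1) < height X w (s + 1) := by
    by_contra h
    exact T.not_covered ⟨0, le_rfl, by omega, by simp only [height_zero]; omega⟩
  have hqs : q ≤ s := by
    obtain ⟨k, h1k, hks, hk⟩ := T.covered 1 one_pos (by omega)
    have := hw.height_one r.pos_size hX
    by_contra hsq
    have := r.height_pos (negL X) hY k h1k (by omega)
    omega
  have hcov : ∀ y ≤ s, LeftCovered (height X (pro w)) (height (negL X) (pro w)) s y := fun y hys =>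
    T.leftCovered_pro_of_between r r.pos hqs y.zero_le hys
  refine ⟨hX, by omega, by omega, fun j hsj hjw => ?_, ?_, fun y hys => Or.inl (hcov y hys)⟩
  · rw [r.rightCovered_pro_iff hX hY (.inl hqs) hsj.le (by omega)]
    refine (T.right (j + 1) (by omega) (by omega)).elim id ?_
    rintro ⟨i, hsi, hij, hi⟩
    rw [height_zero] at hi
    have := hw.height_nonneg hY (j + 1)
    exact ⟨i, hsi, hij, by omega⟩
  · rw [hlast]
    rintro ⟨i, -, -, hi⟩
    obtain ⟨k, -, -, hk⟩ := hcov 0 s.zero_le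
    have hw' := r.isKrewerasWord_pro
    have := hw'.height_nonneg hX i
    have := hw'.height_nonneg hY k
    rw [height_zero] at hk
    rw [hw'.height_length] at hi
    omega

end LeftTrip

namespace RightTrip

variable {n q s e : ℕ} {w : List KLetter} {X Z : KLetter}

theorem height_lt (T : RightTrip w X s e) {j : ℕ} (hsj : s < j) (hje : j ≤ e) :
    height (negL X) w (e + 1) < height (negL X) w j := by
  obtain ⟨i, hsi, hij, hi⟩ := T.covered j hsj hje
  by_contra h
  exact T.not_covered ⟨i, hsi, by omega, by omega⟩

theorem getElem?_end (T : RightTrip w X s e) : w[e]? = some (negL X) :=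
  getElem?_eq_self_of_height_lt (negL_ne_A T.ne_A) (T.height_lt T.lt le_rfl)

theorem exists_height_le (T : RightTrip w X s e) : ∃ i, s ≤ i ∧ i ≤ e ∧
    height X w i ≤ height X w s - height (negL X) w s + height (negL X) w (e + 1) := by
  have hX := T.ne_A
  obtain ⟨i, hsi, hie, hi⟩ := T.covered e T.lt le_rfl
  have := height_succ_of_getElem?_eq_self (negL_ne_A hX) T.getElem?_end
  exact ⟨i, hsi, hie, by omega⟩

theorem return_ne_end (r : FirstReturn n w q Z) (hs : 0 < s) (T : RightTrip w X s e) : q ≠ e := by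
  have hX := T.ne_A
  rintro rfl
  have hY := negL_ne_A hX
  obtain rfl : Z = negL X := Option.some.inj (r.letter.symm.trans T.getElem?_end)
  obtain ⟨i, hsi, hiq, hi⟩ := T.exists_height_le
  have := r.height_pos X hX i (by omega) hiq
  have := r.height_return
  have := r.isKrewerasWord.height_one r.pos_size hX
  rcases T.left 1 hs with ⟨k, h1k, hks, hk⟩ | ⟨k, h1k, hks, hk⟩ <;>
    have := r.height_pos (negL X) hY k h1k (by omega) <;> omega

theorem letter_eq (r : FirstReturn n w q Z) (T : RightTrip w X s e) (hsq : s ≤ q)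
    (hqe : q < e) : Z = X := by
  have hX := T.ne_A
  refine (eq_or_eq_negL hX r.ne_A).resolve_right ?_
  rintro rfl
  have := T.height_lt (j := q + 1) (by omega) hqe
  have := r.height_return
  have := r.isKrewerasWord.height_nonneg (negL_ne_A hX) (e + 1)
  omega

theorem height_add_eq (r : FirstReturn n w q X) (T : RightTrip w X s e) (hsq : s ≤ q)
    (hqe : q < e) : height X w s + height (negL X) w (e + 1) = height (negL X) w s := by
  obtain ⟨i, -, -, hi⟩ := T.exists_height_le
  have := r.isKrewerasWord.height_nonneg r.ne_A i
  have := r.height_return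
  by_contra h
  exact T.not_covered ⟨q + 1, by omega, by omega, by omega⟩

theorem rightCovered_pro_of_between (r : FirstReturn n w q X)
    (T : RightTrip w X (s + 1) (e + 1)) (hsq : s < q) (hqe : q ≤ e) {j : ℕ} (hsj : s < j)
    (hje : j ≤ e) :
    RightCovered (height X (pro w)) (height (negL X) (pro w)) s j := by
  have hX := r.ne_A
  have hY := negL_ne_A hX
  have hew := T.lt_length
  rcases lt_or_ge j q with hjq | hqj
  · rw [r.rightCovered_pro_iff hX hY (.inr hjq) hsj.le (by omega)]
    exact T.covered (j + 1) (by omega) (by omega)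
  -- Position `q - 1` has height `0` in `pro w` and covers every `j ≥ q`.
  have hfq := r.height_pro_of_lt hX (k := q - 1) (by omega)
  rw [Nat.sub_add_cancel (by omega), r.height_letter] at hfq
  have hfs := r.height_pro_of_lt hX hsq
  have hgs := r.height_pro_of_lt hY hsq
  have hgj := r.height_pro_of_ge_of_ne hY (negL_ne_self hX) hqj (by omega)
  have := T.height_lt (j := j + 1) (by omega) (by omega)
  have := T.height_add_eq r hsq (by omega)
  exact ⟨q - 1, by omega, by omega, by omega⟩

theorem not_rightCovered_pro_of_between (r : FirstReturn n w q X)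
    (T : RightTrip w X (s + 1) (e + 1)) (hsq : s < q) (hqe : q ≤ e) :
    ¬RightCovered (height X (pro w)) (height (negL X) (pro w)) s (e + 1) := by
  have hX := r.ne_A
  have hY := negL_ne_A hX
  have hfs := r.height_pro_of_lt hX hsq
  have hgs := r.height_pro_of_lt hY hsq
  have hge := r.height_pro_of_ge_of_ne hY (negL_ne_self hX) (k := e + 1) (by omega) T.lt_length
  have := T.height_add_eq r hsq (by omega)
  rintro ⟨i, -, -, hi⟩
  have := r.isKrewerasWord_pro.height_nonneg hX i
  omega

theorem left_pro_of_not_between (r : FirstReturn n w q Z)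
    (T : RightTrip w X (s + 1) (e + 1)) {y : ℕ} (hq : q ≤ y ∨ e + 1 < q) (hys : y ≤ s) :
    LeftCovered (height X (pro w)) (height (negL X) (pro w)) s y ∨
      Dips (height (negL X) (pro w)) y s (height (negL X) (pro w) (e + 1)) := by
  have hX := T.ne_A
  have hse := T.lt
  have hew := T.lt_length
  obtain ⟨d, hg⟩ := r.exists_height_pro_eq_add (negL_ne_A hX) hq hew
  rw [hg (e + 1) (by omega) le_rfl, dips_shift_iff fun k hk _ => hg k hk (by omega),
    r.leftCovered_pro_iff hX (negL_ne_A hX) (by omega) hys (by omega)]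
  exact T.left (y + 1) (by omega)

theorem left_pro_of_return_le (r : FirstReturn n w q Z)
    (T : RightTrip w X (s + 1) (e + 1)) {y : ℕ} (hyq : y < q) (hqs : q ≤ s) :
    Dips (height (negL X) (pro w)) y s (height (negL X) (pro w) (e + 1)) := by
  have hX := T.ne_A
  have hY := negL_ne_A hX
  have hse := T.lt
  have hdip : Dips (height (negL X) w) (q + 1) (s + 1) (height (negL X) w (e + 1 + 1)) := by
    rcases eq_or_eq_negL hX r.ne_A with rfl | rfl
    · refine (T.left (q + 1) (by omega)).elim ?_ id
      rintro ⟨k, hqk, hks, hk⟩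
      obtain ⟨i, -, -, hi⟩ := T.exists_height_le
      have := r.isKrewerasWord.height_nonneg hX i
      have := r.height_return
      exact ⟨k, hqk, hks, by omega⟩
    · refine ⟨q + 1, le_rfl, by omega, ?_⟩
      rw [r.height_return]
      exact r.isKrewerasWord.height_nonneg hY _
  obtain ⟨d, hg⟩ := r.exists_height_pro_eq_add hY (.inl le_rfl) T.lt_length
  rw [← dips_shift_iff fun k hk _ => hg k hk (by omega), ← hg (e + 1) (by omega) le_rfl] at hdip
  obtain ⟨k, hqk, hks, hk⟩ := hdip
  exact ⟨k, by omega, hks, hk⟩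

theorem left_pro_of_between (r : FirstReturn n w q X) (T : RightTrip w X (s + 1) (e + 1))
    (hsq : s < q) (hqe : q ≤ e) {y : ℕ} (hys : y ≤ s) :
    LeftCovered (height X (pro w)) (height (negL X) (pro w)) s y ∨
      Dips (height (negL X) (pro w)) y s (height (negL X) (pro w) (e + 1)) := by
  have hX := r.ne_A
  have hY := negL_ne_A hX
  have hsw : s < w.length := hsq.trans r.lt_length
  refine (T.left (y + 1) (by omega)).imp (r.leftCovered_pro_iff hX hY (.inr hsq) hys hsw).2 ?_
  intro hdip
  have hg := fun k (_ : y ≤ k) (hk : k ≤ s) => r.height_pro_of_lt hY (hk.trans_lt hsq)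
  obtain ⟨k, hyk, hks, hk⟩ := (dips_shift_iff hg).2 hdip
  have hge := r.height_pro_of_ge_of_ne hY (negL_ne_self hX) (k := e + 1) (by omega) T.lt_length
  exact ⟨k, hyk, hks, by omega⟩

protected theorem pro (r : FirstReturn n w q Z)
    (T : RightTrip w X (s + 1) (e + 1)) : RightTrip (pro w) X s e := by
  have hX := T.ne_A
  have hse := T.lt
  have hew := T.lt_length
  have hlt : e < (pro w).length := by rw [r.length_pro]; omega
  by_cases hq : s < q ∧ q ≤ e
  · obtain ⟨hsq, hqe⟩ := hq
    obtain rfl := T.letter_eq r hsq (by omega)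
    exact ⟨hX, by omega, hlt, fun j => T.rightCovered_pro_of_between r hsq hqe,
      T.not_rightCovered_pro_of_between r hsq hqe, fun y => T.left_pro_of_between r hsq hqe⟩
  have hqe := T.return_ne_end r s.succ_pos
  have hq : q ≤ s ∨ e + 1 < q := by omega
  refine ⟨hX, by omega, hlt, fun j hsj hje => ?_, ?_, fun y hys => ?_⟩
  · exact (r.rightCovered_pro_iff hX (negL_ne_A hX) (by omega) hsj.le (by omega)).2
      (T.covered (j + 1) (by omega) (by omega))
  · rw [r.rightCovered_pro_iff hX (negL_ne_A hX) hq (by omega) hew]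
    exact T.not_covered
  · by_cases hqy : q ≤ y ∨ e + 1 < q
    · exact T.left_pro_of_not_between r hqy hys
    · exact Or.inr (T.left_pro_of_return_le r (by omega) (by omega))

end RightTrip

section Iterate

variable {n q k s t v e : ℕ} {w : List KLetter} {X Z : KLetter}

theorem IsKrewerasWord.pro_iterate (hw : IsKrewerasWord n w) (hn : 0 < n) (k : ℕ) :
    IsKrewerasWord n (pro^[k] w) := by
  induction k with
  | zero => exact hw
  | succ k ih =>
    obtain ⟨q, Z, r⟩ := ih.exists_firstReturn hn
    rw [Function.iterate_succ_apply']
    exact r.isKrewerasWord_pro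

theorem LeftTrip.pro_iterate (hw : IsKrewerasWord n w) (T : LeftTrip w X (s + k) (v + k)) :
    LeftTrip (pro^[k] w) X s v := by
  induction k generalizing w with
  | zero => exact T
  | succ k ih =>
    obtain ⟨q, Z, r⟩ := hw.exists_firstReturn (hw.pos_of_lt_length T.lt_length)
    exact ih r.isKrewerasWord_pro (T.pro r)

theorem RightTrip.pro_iterate (hw : IsKrewerasWord n w) (T : RightTrip w X (s + k) (e + k)) :
    RightTrip (pro^[k] w) X s e := by
  induction k generalizing w with
  | zero => exact T
  | succ k ih =>
    obtain ⟨q, Z, r⟩ := hw.exists_firstReturn (hw.pos_of_lt_length T.lt_length)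
    exact ih r.isKrewerasWord_pro (T.pro r)

theorem IsKrewerasWord.getElem?_pro_iterate_eq_A (hw : IsKrewerasWord n w)
    (hA : w[s + k]? = some A) : (pro^[k] w)[s]? = some A := by
  induction k generalizing w with
  | zero => exact hA
  | succ k ih =>
    have hlt := (List.getElem?_eq_some_iff.1 hA).1
    obtain ⟨q, Z, r⟩ := hw.exists_firstReturn (hw.pos_of_lt_length hlt)
    have hne : s + k + 1 ≠ q := by
      rintro rfl
      exact r.ne_A (Option.some.inj (r.letter.symm.trans hA))
    exact ih r.isKrewerasWord_pro ((r.getElem?_pro_of_ne hlt hne).trans hA)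

namespace FirstReturn

theorem rightTrip_pro_iterate (r : FirstReturn n w q Z) :
    RightTrip (pro^[q + 1] w) Z (w.length - 1 - q) (w.length - 1) := by
  have hn := r.pos_size
  have hqw := r.lt_length
  obtain ⟨p, rfl⟩ : ∃ p, q = p + 1 := ⟨q - 1, by have := r.pos; omega⟩
  obtain ⟨s, hs⟩ : ∃ s, w.length - 1 = s + 1 + p := ⟨w.length - 1 - (p + 1), by omega⟩
  have hleft : LeftTrip (pro^[p + 1] w) Z (s + 1) 0 := by
    refine LeftTrip.pro_iterate (w := pro w) r.isKrewerasWord_pro ?_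
    rw [← hs, zero_add]
    exact r.leftTrip_pro
  have hw' := r.isKrewerasWord.pro_iterate hn (p + 1)
  obtain ⟨q', Z', r'⟩ := hw'.exists_firstReturn hn
  rw [Function.iterate_succ_apply', show w.length - 1 - (p + 1) = s by omega,
    r.isKrewerasWord.1, ← hw'.1]
  exact hleft.rightTrip_pro r'

variable {q' : ℕ} {Z' : KLetter}

theorem return_add_ne (r : FirstReturn n w q Z) (ht : 0 < t)
    (r' : FirstReturn n (pro^[t] w) q' Z') : q' + t ≠ q := by
  rintro rfl
  obtain ⟨k, rfl⟩ : ∃ k, t = k + 1 := ⟨t - 1, by omega⟩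
  have hA := r.isKrewerasWord_pro.getElem?_pro_iterate_eq_A (s := q') (k := k)
    r.getElem?_pro_return
  exact r'.ne_A (Option.some.inj (r'.letter.symm.trans hA))

theorem return_add_ne_add_length (r : FirstReturn n w q Z) (ht : t < w.length)
    (r' : FirstReturn n (pro^[t] w) q' Z') : q' + t ≠ q + w.length := by
  intro heq
  have hlen := r.isKrewerasWord.1
  have hqw' := r'.lt_length
  rw [r'.isKrewerasWord.1] at hqw'
  obtain ⟨k, rfl⟩ : ∃ k, t = k + (q + 1) := ⟨t - (q + 1), by omega⟩
  rw [Function.iterate_add_apply] at r'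
  have hright : RightTrip (pro^[k] (pro^[q + 1] w)) Z (w.length - 1 - q - k)
      (w.length - 1 - k) := by
    refine RightTrip.pro_iterate (r.isKrewerasWord.pro_iterate r.pos_size _) ?_
    rw [Nat.sub_add_cancel (by omega), Nat.sub_add_cancel (by omega)]
    exact r.rightTrip_pro_iterate
  exact hright.return_ne_end r' (by omega) (by omega)

theorem return_add_not_modEq (r : FirstReturn n w q Z) (ht : 0 < t) (htn : t < 3 * n)
    (r' : FirstReturn n (pro^[t] w) q' Z') : ¬q' + t ≡ q [MOD 3 * n] := by
  intro hmod
  have hlen := r.isKrewerasWord.1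
  have hqn := r.lt_length
  have hqn' := r'.lt_length
  rw [hlen] at hqn
  rw [r'.isKrewerasWord.1] at hqn'
  rcases lt_or_ge (q' + t) (3 * n) with hlt | hge
  · exact r.return_add_ne ht r' (hmod.eq_of_lt_of_lt hlt hqn)
  · obtain ⟨m, hm⟩ := Nat.exists_eq_add_of_le' hge
    rw [hm] at hmod
    have := (Nat.add_modEq_right.symm.trans hmod).eq_of_lt_of_lt (by omega) hqn
    exact r.return_add_ne_add_length (by omega) r' (by omega)

end FirstReturn

end Iterate

theorem ksigma_mem_Icc {n i : ℕ} (hn : 0 < n) (w : List KLetter) :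
    ksigma n w i ∈ Set.Icc 1 (3 * n) := by
  have := Nat.mod_lt (kiota (pro^[i - 1] w) + i - 2) (show 0 < 3 * n by omega)
  simp only [ksigma, Set.mem_Icc]
  omega

theorem IsKrewerasWord.ksigma_ne {n i j : ℕ} {w : List KLetter} (hw : IsKrewerasWord n w)
    (hi : 1 ≤ i) (hij : i < j) (hj : j ≤ 3 * n) : ksigma n w i ≠ ksigma n w j := by
  have hn : 0 < n := by omega
  obtain ⟨a, rfl⟩ := Nat.exists_eq_add_of_le' hi
  obtain ⟨t, rfl⟩ := Nat.exists_eq_add_of_lt hij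
  have hw' := hw.pro_iterate hn a
  obtain ⟨q, Z, r⟩ := hw'.exists_firstReturn hn
  obtain ⟨q', Z', r'⟩ := (hw'.pro_iterate hn (t + 1)).exists_firstReturn hn
  have hkiota : kiota (pro^[a + 1 + t] w) = q' + 1 := by
    rw [← r'.kiota_eq, ← Function.iterate_add_apply]
    ring_nf
  intro heq
  refine r.return_add_not_modEq t.succ_pos (by omega) r' (Nat.ModEq.add_right_cancel' a ?_)
  simp only [ksigma, Nat.add_sub_cancel, hkiota, r.kiota_eq, add_left_inj,
    show a + 1 + t + 1 - 1 = a + 1 + t by omega] at heq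
  rw [Nat.ModEq, show q' + (t + 1) + a = q' + 1 + (a + 1 + t + 1) - 2 by omega, ← heq]
  congr 1
  omega

/-- For every Kreweras word `w` of length `3n`, the map `σ_w` is a bijection
of `{1, …, 3n}`. -/
theorem ksigma_bijective (n : ℕ) (w : List KLetter) (hw : IsKrewerasWord n w) :
    Set.BijOn (ksigma n w) (Set.Icc 1 (3 * n)) (Set.Icc 1 (3 * n)) := by
  rcases n.eq_zero_or_pos with rfl | hn
  · simp
  have hmaps : Set.MapsTo (ksigma n w) (Set.Icc 1 (3 * n)) (Set.Icc 1 (3 * n)) :=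
    fun _ _ => ksigma_mem_Icc hn w
  refine ((Set.finite_Icc 1 (3 * n)).injOn_iff_bijOn_of_mapsTo hmaps).1 ?_
  rintro i ⟨hi, hin⟩ j ⟨hj, hjn⟩ heq
  by_contra hij
  rcases Nat.lt_or_gt_of_ne hij with hij | hij
  · exact hw.ksigma_ne hi hij hjn heq
  · exact hw.ksigma_ne hj hij hin heq.symm
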